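/- Let δ and δ* be positive integers with δ dividing δ*. Then the multigranular transformation from the level of granularity δ+1 to the level of granularity δ*+1 is lossless: for every valid 2-tuple (j, α) with j ∈ {0, …, δ}, α ∈ [−1/2, 1/2), and j + α ∈ [0, δ], applying TF to the level with granularity δ*+1 and then applying the reverse transformation back to the level with granularity δ+1 returns exactly (j, α). -/

import Mathlib

/-!
`DeltaInv` and `Delta` are mutually inverse between reals and pairs whose second component
lies in `[-1/2, 1/2)` (`DeltaInv_Delta`, `Delta_DeltaInv`). Hence on numerical values the two
transformations are multiplication by `δs / δ` and by `δ / δs`, which cancel.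
-/

/-- The 2-tuple linguistic representation: `Δ β = (round β, β - round β)`,
where `round` is the nearest integer (ties rounded up). -/
noncomputable def Delta (β : ℝ) : ℤ × ℝ := (round β, β - round β)

/-- The numerical value of a 2-tuple: `Δ⁻¹ (i, α) = i + α`. -/
noncomputable def DeltaInv (p : ℤ × ℝ) : ℝ := (p.1 : ℝ) + p.2

/-- A valid 2-tuple at the level with granularity `δ + 1`. -/
def ValidPair (δ : ℕ) (p : ℤ × ℝ) : Prop :=
  0 ≤ p.1 ∧ p.1 ≤ (δ : ℤ) ∧ p.2 ∈ Set.Ico (-(1/2) : ℝ) (1/2) ∧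
  DeltaInv p ∈ Set.Icc (0:ℝ) δ

/-- The multigranular transformation from the level of granularity `δ + 1` to
the level of granularity `δ* + 1`: `TF (j, α) = Δ ((j + α) · δ*/δ)`.
The reverse transformation is `TF δ* δ`. -/
noncomputable def TF (δ δs : ℕ) (p : ℤ × ℝ) : ℤ × ℝ :=
  Delta (DeltaInv p * δs / δ)

theorem DeltaInv_Delta (β : ℝ) : DeltaInv (Delta β) = β := by
  simp [DeltaInv, Delta]

/-- Uniqueness of the 2-tuple representation. The half-open range for the second
component matches the convention that ties round up. -/
theorem Delta_DeltaInv (p : ℤ × ℝ) (h : p.2 ∈ Set.Ico (-(1/2) : ℝ) (1/2)) :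
    Delta (DeltaInv p) = p := by
  obtain ⟨j, α⟩ := p
  obtain ⟨h₁, h₂⟩ := h
  have hr : round ((j : ℝ) + α) = j := by
    rw [round_eq, Int.floor_eq_iff]
    constructor <;> linarith
  simp [Delta, DeltaInv, hr]

/-- For positive integers `δ ∣ δ*`, the multigranular transformation is
lossless: for every valid 2-tuple `(j, α)` at granularity `δ + 1`, applying
`TF` to the level with granularity `δ* + 1` and then the reverse
transformation back returns exactly `(j, α)`. -/
theorem tf_lossless (δ δs : ℕ) (hδ : 0 < δ) (hδs : 0 < δs) (hdvd : δ ∣ δs)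
    (p : ℤ × ℝ) (hp : ValidPair δ p) :
    TF δs δ (TF δ δs p) = p := by
  have h₁ : (δ : ℝ) ≠ 0 := by positivity
  have h₂ : (δs : ℝ) ≠ 0 := by positivity
  have hβ : DeltaInv p * δs / δ * δ / δs = DeltaInv p := by field_simp
  rw [TF, TF, DeltaInv_Delta, hβ, Delta_DeltaInv p hp.2.2.1]
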